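/- For the Cantor ternary set C and any constant s > 2, if the positive even integer k satisfies k ≥ 2^{s/2 + 1}·⌈((s+3)/(s-2))^{s/2 - 1}·((5s+6)/(5s-6)) + 1⌉, then for every choice of positive integers a₁,…,a_k with a_{2i-1} + a_{2i} = s for all i, one has [0, k/2] = { ∑_{i=1}^{k/2} x_{2i-1}^{a_{2i-1}} x_{2i}^{a_{2i}} : x₁,…,x_k ∈ C }. -/

import Mathlib

/-- The `n`-th stage of the Cantor construction with ratio `r`:
`C_0 = [0,1]`, `C_{n+1} = f₀(C_n) ∪ f₁(C_n)` with `f₀ x = r x`, `f₁ x = r x + (1-r)`. -/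
def preCantorR (r : ℝ) : ℕ → Set ℝ
  | 0 => Set.Icc 0 1
  | n + 1 =>
      (fun x => r * x) '' preCantorR r n ∪ (fun x => r * x + (1 - r)) '' preCantorR r n

/-- The generalized Cantor set with contraction ratio `r`. -/
def cantorSetR (r : ℝ) : Set ℝ := ⋂ n, preCantorR r n

/-- The classical Cantor ternary set. -/
def cantorTernary : Set ℝ := cantorSetR (1/3)

/-- `pairSumVec a m x = ∑_{i=1}^{m} x_{2i-1}^{a_{2i-1}} x_{2i}^{a_{2i}}` (0-indexed),
i.e. the non-diagonal form `f_{k,\vec a}` with `k = 2m`. -/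
def pairSumVec (a : ℕ → ℕ) (m : ℕ) (x : ℕ → ℝ) : ℝ :=
  ∑ i ∈ Finset.range m, x (2 * i) ^ a (2 * i) * x (2 * i + 1) ^ a (2 * i + 1)

/-- The image `f_{k,\vec a}(S^k)` with `k = 2m`. -/
def imageOnVec (a : ℕ → ℕ) (m : ℕ) (S : Set ℝ) : Set ℝ :=
  {y | ∃ x : ℕ → ℝ, (∀ i, x i ∈ S) ∧ y = pairSumVec a m x}

/-!
Newhouse's gap lemma, applied to the sets `{x ^ e | x ∈ C}`. A gap of such a set is at most
`K = 2 ^ e - 1` times as long as the adjacent bridges; hence, with `K + 1` summands, the longest of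
all the gaps can be filled by the other summands, and removing the gaps in order of decreasing
length never shrinks the sum. In each product `x ^ a * y ^ b` the variable with the larger exponent
is set to `1`, so that only exponents up to `s / 2` remain.
-/

open Set

/-- A closed interval `[left, right]` together with finitely many open intervals `(g.1, g.2)`, its
gaps, to be removed from it: a finite stage in the construction of a Cantor set. -/
structure GappedInterval where
  left : ℝ
  right : ℝ
  gaps : Finset (ℝ × ℝ)

namespace GappedInterval

/-- The interval with its gaps removed. -/
def carrier (I : GappedInterval) : Set ℝ :=
  {x ∈ Icc I.left I.right | ∀ g ∈ I.gaps, x ∉ Ioo g.1 g.2}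

/-- The length of the underlying interval, gaps included. -/
def length (I : GappedInterval) : ℝ := I.right - I.left

/-- Newhouse thickness at least `K⁻¹`: every gap is at most `K` times as long as what separates it
from the ends of the interval and from any gap at least as long. -/
structure IsThick (K : ℝ) (I : GappedInterval) : Prop where
  left_le_right : I.left ≤ I.right
  gap_lt : ∀ g ∈ I.gaps, g.1 < g.2
  gap_le_left : ∀ g ∈ I.gaps, g.2 - g.1 ≤ K * (g.1 - I.left)
  gap_le_right : ∀ g ∈ I.gaps, g.2 - g.1 ≤ K * (I.right - g.2)
  separated : ∀ g ∈ I.gaps, ∀ g' ∈ I.gaps, g ≠ g' →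
    min (g.2 - g.1) (g'.2 - g'.1) ≤ K * (g'.1 - g.2) ∨
      min (g.2 - g.1) (g'.2 - g'.1) ≤ K * (g.1 - g'.2)

section Thick

variable {K : ℝ} {I : GappedInterval} {g g' : ℝ × ℝ}

theorem IsThick.left_lt_fst (hI : I.IsThick K) (hK : 0 < K) (hg : g ∈ I.gaps) : I.left < g.1 := by
  have hpos := (sub_pos.2 (hI.gap_lt g hg)).trans_le (hI.gap_le_left g hg)
  exact sub_pos.1 ((mul_pos_iff_of_pos_left hK).1 hpos)

theorem IsThick.snd_lt_right (hI : I.IsThick K) (hK : 0 < K) (hg : g ∈ I.gaps) :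
    g.2 < I.right := by
  have hpos := (sub_pos.2 (hI.gap_lt g hg)).trans_le (hI.gap_le_right g hg)
  exact sub_pos.1 ((mul_pos_iff_of_pos_left hK).1 hpos)

theorem IsThick.fst_mem_Icc (hI : I.IsThick K) (hK : 0 < K) (hg : g ∈ I.gaps) :
    g.1 ∈ Icc I.left I.right :=
  ⟨(hI.left_lt_fst hK hg).le, ((hI.gap_lt g hg).trans (hI.snd_lt_right hK hg)).le⟩

theorem IsThick.snd_mem_Icc (hI : I.IsThick K) (hK : 0 < K) (hg : g ∈ I.gaps) :
    g.2 ∈ Icc I.left I.right :=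
  ⟨((hI.left_lt_fst hK hg).trans (hI.gap_lt g hg)).le, (hI.snd_lt_right hK hg).le⟩

theorem IsThick.gap_le_length (hI : I.IsThick K) (hK : 0 < K) (hg : g ∈ I.gaps) :
    g.2 - g.1 ≤ I.length :=
  sub_le_sub (hI.snd_lt_right hK hg).le (hI.left_lt_fst hK hg).le

theorem IsThick.before_or_after (hI : I.IsThick K) (hK : 0 < K) (hg : g ∈ I.gaps)
    (hg' : g' ∈ I.gaps) (hne : g' ≠ g) (hle : g'.2 - g'.1 ≤ g.2 - g.1) :
    (g'.2 ≤ g.1 ∧ g'.2 - g'.1 ≤ K * (g.1 - g'.2)) ∨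
      (g.2 ≤ g'.1 ∧ g'.2 - g'.1 ≤ K * (g'.1 - g.2)) := by
  have of_le {d : ℝ} (hd : g'.2 - g'.1 ≤ K * d) : 0 ≤ d :=
    ((mul_pos_iff_of_pos_left hK).1 ((sub_pos.2 (hI.gap_lt g' hg')).trans_le hd)).le
  have hsep := hI.separated g' hg' g hg hne
  rw [min_eq_left hle] at hsep
  exact hsep.imp (fun h => ⟨sub_nonneg.1 (of_le h), h⟩) fun h => ⟨sub_nonneg.1 (of_le h), h⟩

/-- The part of a gapped interval to the left of its gap `g`. -/
noncomputable def leftOf (I : GappedInterval) (g : ℝ × ℝ) : GappedInterval where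
  left := I.left
  right := g.1
  gaps := {g' ∈ I.gaps | g'.2 ≤ g.1}

/-- The part of a gapped interval to the right of its gap `g`. -/
noncomputable def rightOf (I : GappedInterval) (g : ℝ × ℝ) : GappedInterval where
  left := g.2
  right := I.right
  gaps := {g' ∈ I.gaps | g.2 ≤ g'.1}

theorem leftOf_gaps_subset : (I.leftOf g).gaps ⊆ I.gaps := Finset.filter_subset _ _

theorem rightOf_gaps_subset : (I.rightOf g).gaps ⊆ I.gaps := Finset.filter_subset _ _

theorem card_gaps_leftOf_lt (hg : g ∈ I.gaps) (hlt : g.1 < g.2) :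
    (I.leftOf g).gaps.card < I.gaps.card :=
  Finset.card_lt_card (Finset.filter_ssubset.2 ⟨g, hg, hlt.not_ge⟩)

theorem card_gaps_rightOf_lt (hg : g ∈ I.gaps) (hlt : g.1 < g.2) :
    (I.rightOf g).gaps.card < I.gaps.card :=
  Finset.card_lt_card (Finset.filter_ssubset.2 ⟨g, hg, hlt.not_ge⟩)

theorem IsThick.leftOf (hI : I.IsThick K) (hK : 0 < K) (hg : g ∈ I.gaps)
    (hmax : ∀ g' ∈ I.gaps, g'.2 - g'.1 ≤ g.2 - g.1) : (I.leftOf g).IsThick K where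
  left_le_right := (hI.left_lt_fst hK hg).le
  gap_lt g' hg' := hI.gap_lt g' (leftOf_gaps_subset hg')
  gap_le_left g' hg' := hI.gap_le_left g' (leftOf_gaps_subset hg')
  gap_le_right g' hg' := by
    obtain ⟨hmem, hle⟩ := Finset.mem_filter.1 hg'
    have hlt := hI.gap_lt g hg
    have hlt' := hI.gap_lt g' hmem
    have hne : g' ≠ g := by rintro rfl; exact hlt.not_ge hle
    rcases hI.before_or_after hK hg hmem hne (hmax g' hmem) with h | h
    · exact h.2
    · linarith [h.1]
  separated g₁ h₁ g₂ h₂ :=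
    hI.separated g₁ (leftOf_gaps_subset h₁) g₂ (leftOf_gaps_subset h₂)

theorem IsThick.rightOf (hI : I.IsThick K) (hK : 0 < K) (hg : g ∈ I.gaps)
    (hmax : ∀ g' ∈ I.gaps, g'.2 - g'.1 ≤ g.2 - g.1) : (I.rightOf g).IsThick K where
  left_le_right := (hI.snd_lt_right hK hg).le
  gap_lt g' hg' := hI.gap_lt g' (rightOf_gaps_subset hg')
  gap_le_left g' hg' := by
    obtain ⟨hmem, hle⟩ := Finset.mem_filter.1 hg'
    have hlt := hI.gap_lt g hg
    have hlt' := hI.gap_lt g' hmem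
    have hne : g' ≠ g := by rintro rfl; exact hlt.not_ge hle
    rcases hI.before_or_after hK hg hmem hne (hmax g' hmem) with h | h
    · linarith [h.1]
    · exact h.2
  gap_le_right g' hg' := hI.gap_le_right g' (rightOf_gaps_subset hg')
  separated g₁ h₁ g₂ h₂ :=
    hI.separated g₁ (rightOf_gaps_subset h₁) g₂ (rightOf_gaps_subset h₂)

theorem IsThick.carrier_leftOf_subset (hI : I.IsThick K) (hK : 0 < K) (hg : g ∈ I.gaps)
    (hmax : ∀ g' ∈ I.gaps, g'.2 - g'.1 ≤ g.2 - g.1) : (I.leftOf g).carrier ⊆ I.carrier := by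
  rintro x ⟨⟨hleft, hright : x ≤ g.1⟩, hx⟩
  refine ⟨⟨hleft, hright.trans (hI.fst_mem_Icc hK hg).2⟩, fun g' hg' hxg' => ?_⟩
  rcases eq_or_ne g' g with rfl | hne
  · exact hxg'.1.not_ge hright
  rcases hI.before_or_after hK hg hg' hne (hmax g' hg') with h | h
  · exact hx g' (Finset.mem_filter.2 ⟨hg', h.1⟩) hxg'
  · linarith [hxg'.1, h.1, hI.gap_lt g hg]

theorem IsThick.carrier_rightOf_subset (hI : I.IsThick K) (hK : 0 < K) (hg : g ∈ I.gaps)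
    (hmax : ∀ g' ∈ I.gaps, g'.2 - g'.1 ≤ g.2 - g.1) : (I.rightOf g).carrier ⊆ I.carrier := by
  rintro x ⟨⟨hleft : g.2 ≤ x, hright⟩, hx⟩
  refine ⟨⟨(hI.snd_mem_Icc hK hg).1.trans hleft, hright⟩, fun g' hg' hxg' => ?_⟩
  rcases eq_or_ne g' g with rfl | hne
  · exact hxg'.2.not_ge hleft
  rcases hI.before_or_after hK hg hg' hne (hmax g' hg') with h | h
  · linarith [hxg'.2, h.1, hI.gap_lt g hg]
  · exact hx g' (Finset.mem_filter.2 ⟨hg', h.1⟩) hxg'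

end Thick

end GappedInterval

section GapLemma

open GappedInterval

theorem sum_comp_update {ι α M : Type*} [Fintype ι] [DecidableEq ι] [AddCommMonoid M] (F : α → M)
    (f : ι → α) (j : ι) (a : α) :
    ∑ i, F (Function.update f j a i) = F a + ∑ i ∈ Finset.univ.erase j, F (f i) := by
  rw [← Finset.add_sum_erase _ _ (Finset.mem_univ j), Function.update_self]
  congr 1
  exact Finset.sum_congr rfl fun i hi => by rw [Function.update_of_ne (Finset.ne_of_mem_erase hi)]

theorem exists_sum_eq_of_mem_Icc {ι : Type*} [Fintype ι] {p q : ι → ℝ} (hpq : p ≤ q) {t : ℝ}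
    (ht : t ∈ Icc (∑ i, p i) (∑ i, q i)) : ∃ z ∈ Icc p q, ∑ i, z i = t :=
  (convex_Icc p q).isPreconnected.intermediate_value (left_mem_Icc.2 hpq) (right_mem_Icc.2 hpq)
    (f := fun z => ∑ i, z i) (by fun_prop) ht

variable {ι : Type*} {K : ℝ} {I : ι → GappedInterval}

/-- A family of thick gapped intervals in which no gap is too long, up to the factor `K`, compared
with any of the intervals: the hypothesis that is preserved when a longest gap is removed. -/
structure Interlocked (K : ℝ) (I : ι → GappedInterval) : Prop where
  isThick : ∀ i, (I i).IsThick K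
  gap_le : ∀ i j, ∀ g ∈ (I j).gaps, g.2 - g.1 ≤ K * (I i).length

theorem Interlocked.update [DecidableEq ι] (hI : Interlocked K I) {j : ι} {J : GappedInterval}
    (hJ : J.IsThick K) (hsub : J.gaps ⊆ (I j).gaps)
    (hlen : ∀ i, ∀ g ∈ (I i).gaps, g.2 - g.1 ≤ K * J.length) :
    Interlocked K (Function.update I j J) := by
  have hgaps (l : ι) : (Function.update I j J l).gaps ⊆ (I l).gaps := by
    rcases eq_or_ne l j with rfl | hl
    · rwa [Function.update_self]
    · rw [Function.update_of_ne hl]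
  refine ⟨fun i => ?_, fun i l g hg => ?_⟩ <;> rcases eq_or_ne i j with rfl | hi
  · rwa [Function.update_self]
  · rw [Function.update_of_ne hi]
    exact hI.isThick i
  · rw [Function.update_self]
    exact hlen l g (hgaps l hg)
  · rw [Function.update_of_ne hi]
    exact hI.gap_le i l g (hgaps l hg)

theorem exists_longest_gap [Finite ι] (hne : ∃ i, (I i).gaps.Nonempty) :
    ∃ j, ∃ g ∈ (I j).gaps, ∀ i, ∀ g' ∈ (I i).gaps, g'.2 - g'.1 ≤ g.2 - g.1 := by
  cases nonempty_fintype ι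
  obtain ⟨i, g, hg⟩ := hne
  obtain ⟨⟨j, g⟩, hg, hmax⟩ := Finset.exists_max_image
    (Finset.univ.sigma fun i => (I i).gaps) (fun x => x.2.2 - x.2.1) ⟨⟨i, g⟩, by simpa using hg⟩
  exact ⟨j, g, by simpa using hg, fun l g' hg' => hmax ⟨l, g'⟩ (by simpa using hg')⟩

variable [Fintype ι]

theorem Interlocked.gap_le_sum_length [DecidableEq ι] (hI : Interlocked K I) (hK : 0 < K)
    (hcard : K + 1 ≤ Fintype.card ι) {j : ι} {g : ℝ × ℝ} (hg : g ∈ (I j).gaps) :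
    g.2 - g.1 ≤ ∑ i ∈ Finset.univ.erase j, (I i).length := by
  have hcard' : K ≤ (Finset.univ.erase j).card := by
    rw [Finset.card_erase_of_mem (Finset.mem_univ j), Finset.card_univ,
      Nat.cast_pred (Fintype.card_pos_iff.2 ⟨j⟩)]
    linarith
  have hlt := (hI.isThick j).gap_lt g hg
  refine le_of_mul_le_mul_left ?_ hK
  calc K * (g.2 - g.1) ≤ (Finset.univ.erase j).card * (g.2 - g.1) := by gcongr
    _ = ∑ _i ∈ Finset.univ.erase j, (g.2 - g.1) := by rw [Finset.sum_const, nsmul_eq_mul]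
    _ ≤ ∑ i ∈ Finset.univ.erase j, K * (I i).length :=
      Finset.sum_le_sum fun i _ => hI.gap_le i j g hg
    _ = K * ∑ i ∈ Finset.univ.erase j, (I i).length := (Finset.mul_sum ..).symm

theorem Interlocked.exists_update [DecidableEq ι] (hI : Interlocked K I) (hK : 0 < K)
    (hcard : K + 1 ≤ Fintype.card ι) (hne : ∃ i, (I i).gaps.Nonempty) {t : ℝ}
    (ht : t ∈ Icc (∑ i, (I i).left) (∑ i, (I i).right)) :
    ∃ j J, J.carrier ⊆ (I j).carrier ∧ J.gaps.card < (I j).gaps.card ∧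
      Interlocked K (Function.update I j J) ∧
      t ∈ Icc (∑ i, (Function.update I j J i).left) (∑ i, (Function.update I j J i).right) := by
  obtain ⟨j, g, hg, hmax⟩ := exists_longest_gap hne
  have hthick := hI.isThick j
  have hlt := hthick.gap_lt g hg
  have hfill := hI.gap_le_sum_length hK hcard hg
  simp only [length, Finset.sum_sub_distrib] at hfill
  simp only [← Finset.add_sum_erase _ _ (Finset.mem_univ j)] at ht
  obtain ⟨hleft, hright⟩ := ht
  rcases le_total t (g.1 + ∑ i ∈ Finset.univ.erase j, (I i).right) with h | h
  · refine ⟨j, (I j).leftOf g, hthick.carrier_leftOf_subset hK hg (hmax j),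
      card_gaps_leftOf_lt hg hlt, hI.update (hthick.leftOf hK hg (hmax j)) leftOf_gaps_subset
        fun i g' hg' => (hmax i g' hg').trans (hthick.gap_le_left g hg), ?_⟩
    rw [sum_comp_update, sum_comp_update]
    exact ⟨hleft, h⟩
  · refine ⟨j, (I j).rightOf g, hthick.carrier_rightOf_subset hK hg (hmax j),
      card_gaps_rightOf_lt hg hlt, hI.update (hthick.rightOf hK hg (hmax j)) rightOf_gaps_subset
        fun i g' hg' => (hmax i g' hg').trans (hthick.gap_le_right g hg), ?_⟩
    rw [sum_comp_update, sum_comp_update]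
    exact ⟨by dsimp only [rightOf]; linarith, hright⟩

theorem Interlocked.exists_sum_eq (hI : Interlocked K I) (hK : 0 < K)
    (hcard : K + 1 ≤ Fintype.card ι) {t : ℝ}
    (ht : t ∈ Icc (∑ i, (I i).left) (∑ i, (I i).right)) :
    ∃ z : ι → ℝ, (∀ i, z i ∈ (I i).carrier) ∧ ∑ i, z i = t := by
  classical
  induction hN : ∑ i, (I i).gaps.card using Nat.strong_induction_on generalizing I with
  | _ N ih =>
  by_cases hne : ∃ i, (I i).gaps.Nonempty
  · obtain ⟨j, J, hsub, hlt, hJ, htJ⟩ := hI.exists_update hK hcard hne ht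
    have hdecr : ∑ i, (Function.update I j J i).gaps.card < N := by
      rw [sum_comp_update fun J : GappedInterval => J.gaps.card, ← hN,
        ← Finset.add_sum_erase _ _ (Finset.mem_univ j)]
      gcongr
    obtain ⟨z, hz, hzt⟩ := ih _ hdecr hJ htJ rfl
    refine ⟨z, fun i => ?_, hzt⟩
    rcases eq_or_ne i j with rfl | hij
    · exact hsub (by simpa only [Function.update_self] using hz i)
    · simpa only [Function.update_of_ne hij] using hz i
  · obtain ⟨z, ⟨hleft, hright⟩, hzt⟩ :=
      exists_sum_eq_of_mem_Icc (fun i => (hI.isThick i).left_le_right) ht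
    exact ⟨z, fun i => ⟨⟨hleft i, hright i⟩, fun g hg => (hne ⟨i, g, hg⟩).elim⟩, hzt⟩

end GapLemma

section Quasisymmetric

/-- The Beurling–Ahlfors condition, for increasing functions: of two adjacent intervals, the image
of the shorter one is at most `K` times as long as the image of the longer one. -/
structure QuasisymmetricOn (K : ℝ) (f : ℝ → ℝ) (s : Set ℝ) : Prop where
  strictMonoOn : StrictMonoOn f s
  sub_le_sub_right : ∀ {x y z}, x ∈ s → y ∈ s → z ∈ s → x ≤ y → y - x ≤ z - y →
    f y - f x ≤ K * (f z - f y)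
  sub_le_sub_left : ∀ {x y z}, x ∈ s → y ∈ s → z ∈ s → y ≤ z → z - y ≤ y - x →
    f z - f y ≤ K * (f y - f x)

theorem QuasisymmetricOn.mono {K L : ℝ} {f : ℝ → ℝ} {s t : Set ℝ} (hf : QuasisymmetricOn K f s)
    (hKL : K ≤ L) (hts : t ⊆ s) : QuasisymmetricOn L f t where
  strictMonoOn := hf.strictMonoOn.mono hts
  sub_le_sub_right hx hy hz hxy h := by
    refine (hf.sub_le_sub_right (hts hx) (hts hy) (hts hz) hxy h).trans ?_
    have := hf.strictMonoOn.monotoneOn (hts hy) (hts hz) (by linarith)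
    gcongr
  sub_le_sub_left hx hy hz hyz h := by
    refine (hf.sub_le_sub_left (hts hx) (hts hy) (hts hz) hyz h).trans ?_
    have := hf.strictMonoOn.monotoneOn (hts hx) (hts hy) (by linarith)
    gcongr

theorem quasisymmetricOn_affine {r : ℝ} (hr : 0 < r) (c : ℝ) (s : Set ℝ) :
    QuasisymmetricOn 1 (fun x => r * x + c) s where
  strictMonoOn := fun x _ y _ hxy => by dsimp only; gcongr
  sub_le_sub_right _ _ _ _ h := by linarith [mul_le_mul_of_nonneg_left h hr.le]
  sub_le_sub_left _ _ _ _ h := by linarith [mul_le_mul_of_nonneg_left h hr.le]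

theorem one_add_pow_le_one_add_mul {θ : ℝ} (h0 : 0 ≤ θ) (h1 : θ ≤ 1) (n : ℕ) :
    (1 + θ) ^ n ≤ 1 + θ * (2 ^ n - 1) := by
  have hconv := (convexOn_pow n).2 (mem_Ici.2 zero_le_one) (mem_Ici.2 (zero_le_two (α := ℝ)))
    (sub_nonneg.2 h1) h0 (sub_add_cancel 1 θ)
  simp only [smul_eq_mul, one_pow] at hconv
  calc (1 + θ) ^ n = ((1 - θ) * 1 + θ * 2) ^ n := by ring
    _ ≤ (1 - θ) * 1 + θ * 2 ^ n := hconv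
    _ = 1 + θ * (2 ^ n - 1) := by ring

theorem pow_sub_pow_le_pow_sub_pow {x y z : ℝ} (hx : 0 ≤ x) (hxy : x ≤ y) (h : y - x ≤ z - y)
    (n : ℕ) : y ^ n - x ^ n ≤ z ^ n - y ^ n := by
  have hmid : y ^ n ≤ 1 / 2 * x ^ n + 1 / 2 * (2 * y - x) ^ n := by
    have hconv := (convexOn_pow n).2 (mem_Ici.2 hx) (mem_Ici.2 (by linarith : 0 ≤ 2 * y - x))
      (by norm_num : (0 : ℝ) ≤ 1 / 2) (by norm_num : (0 : ℝ) ≤ 1 / 2) (by norm_num)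
    simp only [smul_eq_mul] at hconv
    rwa [show 1 / 2 * x + 1 / 2 * (2 * y - x) = y by ring] at hconv
  have hz : (2 * y - x) ^ n ≤ z ^ n := pow_le_pow_left₀ (by linarith) (by linarith) n
  linarith

theorem pow_sub_pow_le_mul_pow_sub_pow {x y z : ℝ} (hx : 0 ≤ x) (hyz : y ≤ z)
    (h : z - y ≤ y - x) {n : ℕ} (hn : n ≠ 0) :
    z ^ n - y ^ n ≤ (2 ^ n - 1) * (y ^ n - x ^ n) := by
  rcases (hx.trans (by linarith : x ≤ y)).eq_or_lt with rfl | hy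
  · obtain rfl : x = 0 := by linarith
    obtain rfl : z = 0 := by linarith
    simp [hn]
  obtain ⟨θ, rfl⟩ : ∃ θ, x = y * (1 - θ) := ⟨1 - x / y, by field_simp; ring⟩
  have hθ0 : 0 ≤ θ := nonneg_of_mul_nonneg_right (by linarith : 0 ≤ y * θ) hy
  have hθ1 : 0 ≤ 1 - θ := nonneg_of_mul_nonneg_right hx hy
  have hK : (0 : ℝ) ≤ 2 ^ n - 1 := sub_nonneg.2 (one_le_pow₀ one_le_two)
  have hzn : z ^ n ≤ y ^ n * (1 + θ * (2 ^ n - 1)) :=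
    calc z ^ n ≤ (y * (1 + θ)) ^ n := pow_le_pow_left₀ (by linarith) (by linarith) n
      _ = y ^ n * (1 + θ) ^ n := mul_pow ..
      _ ≤ y ^ n * (1 + θ * (2 ^ n - 1)) := by
        gcongr
        exact one_add_pow_le_one_add_mul hθ0 (by linarith) n
  have hxn : (y * (1 - θ)) ^ n ≤ y ^ n * (1 - θ) := by
    rw [mul_pow]
    gcongr
    exact pow_le_of_le_one hθ1 (by linarith) hn
  calc z ^ n - y ^ n ≤ (2 ^ n - 1) * (y ^ n - y ^ n * (1 - θ)) := by linarith
    _ ≤ (2 ^ n - 1) * (y ^ n - (y * (1 - θ)) ^ n) := by gcongr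

theorem quasisymmetricOn_pow {n : ℕ} (hn : n ≠ 0) :
    QuasisymmetricOn (2 ^ n - 1) (fun x => x ^ n) (Ici 0) where
  strictMonoOn := pow_left_strictMonoOn₀ hn
  sub_le_sub_right {x y z} hx hy _ hxy h := by
    have htwo : (2 : ℝ) ≤ 2 ^ n := le_self_pow₀ one_le_two hn
    have hyz : y ^ n ≤ z ^ n := pow_le_pow_left₀ hy (by linarith) n
    refine (pow_sub_pow_le_pow_sub_pow hx hxy h n).trans ?_
    exact le_mul_of_one_le_left (by linarith) (by linarith)
  sub_le_sub_left hx _ _ hyz h := pow_sub_pow_le_mul_pow_sub_pow hx hyz h hn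

end Quasisymmetric

namespace GappedInterval

/-- The image of a gapped interval under an increasing function. -/
noncomputable def map (f : ℝ → ℝ) (I : GappedInterval) : GappedInterval where
  left := f I.left
  right := f I.right
  gaps := I.gaps.image (Prod.map f f)

theorem IsThick.map {K : ℝ} {f : ℝ → ℝ} {I : GappedInterval} (hI : I.IsThick 1)
    (hf : QuasisymmetricOn K f (Icc I.left I.right)) : (I.map f).IsThick K := by
  have hl : I.left ∈ Icc I.left I.right := left_mem_Icc.2 hI.left_le_right
  have hr : I.right ∈ Icc I.left I.right := right_mem_Icc.2 hI.left_le_right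
  have hfst {g} (hg : g ∈ I.gaps) := hI.fst_mem_Icc one_pos hg
  have hsnd {g} (hg : g ∈ I.gaps) := hI.snd_mem_Icc one_pos hg
  have min_le {g g'} (hg : g ∈ I.gaps) (hg' : g' ∈ I.gaps)
      (h : min (g.2 - g.1) (g'.2 - g'.1) ≤ g'.1 - g.2) :
      min (f g.2 - f g.1) (f g'.2 - f g'.1) ≤ K * (f g'.1 - f g.2) :=
    min_le_iff.2 <| (min_le_iff.1 h).imp
      (hf.sub_le_sub_right (hfst hg) (hsnd hg) (hfst hg') (hI.gap_lt g hg).le)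
      (hf.sub_le_sub_left (hsnd hg) (hfst hg') (hsnd hg') (hI.gap_lt g' hg').le)
  refine ⟨hf.strictMonoOn.monotoneOn hl hr hI.left_le_right, ?_, ?_, ?_, ?_⟩ <;>
    refine Finset.forall_mem_image.2 fun g hg => ?_
  · exact hf.strictMonoOn (hfst hg) (hsnd hg) (hI.gap_lt g hg)
  · exact hf.sub_le_sub_left hl (hfst hg) (hsnd hg) (hI.gap_lt g hg).le
      (by simpa only [one_mul] using hI.gap_le_left g hg)
  · exact hf.sub_le_sub_right (hfst hg) (hsnd hg) hr (hI.gap_lt g hg).le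
      (by simpa only [one_mul] using hI.gap_le_right g hg)
  · refine Finset.forall_mem_image.2 fun g' hg' hne => ?_
    have hsep := hI.separated g hg g' hg' (ne_of_apply_ne _ hne)
    simp only [one_mul] at hsep
    exact hsep.imp (min_le hg hg') fun h => by
      rw [min_comm] at h ⊢
      exact min_le hg' hg h

theorem IsThick.carrier_map_subset {K : ℝ} {f : ℝ → ℝ} {I : GappedInterval} (hI : I.IsThick K)
    (hK : 0 < K) (hf : StrictMonoOn f (Icc I.left I.right))
    (hcont : ContinuousOn f (Icc I.left I.right)) : (I.map f).carrier ⊆ f '' I.carrier := by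
  rintro y ⟨hy, hgaps⟩
  obtain ⟨x, hx, rfl⟩ := intermediate_value_Icc hI.left_le_right hcont hy
  refine ⟨x, ⟨hx, fun g hg hxg => hgaps _ (Finset.mem_image_of_mem _ hg) ?_⟩, rfl⟩
  exact ⟨hf (hI.fst_mem_Icc hK hg) hx hxg.1, hf hx (hI.snd_mem_Icc hK hg) hxg.2⟩

/-- The union of two gapped intervals, with the interval between them as a new gap. -/
noncomputable def glue (I J : GappedInterval) : GappedInterval where
  left := I.left
  right := J.right
  gaps := insert (I.right, J.left) (I.gaps ∪ J.gaps)

variable {I J : GappedInterval}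

theorem carrier_glue_subset : (I.glue J).carrier ⊆ I.carrier ∪ J.carrier := by
  rintro x ⟨⟨hleft, hright⟩, hx⟩
  have hgap : x ∉ Ioo I.right J.left := hx _ (Finset.mem_insert_self _ _)
  rcases le_or_gt x I.right with h | h
  · exact Or.inl ⟨⟨hleft, h⟩, fun g hg =>
      hx g (Finset.mem_insert_of_mem (Finset.mem_union_left _ hg))⟩
  · exact Or.inr ⟨⟨not_lt.1 fun h' => hgap ⟨h, h'⟩, hright⟩, fun g hg =>
      hx g (Finset.mem_insert_of_mem (Finset.mem_union_right _ hg))⟩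

theorem IsThick.glue {K : ℝ} (hI : I.IsThick K) (hJ : J.IsThick K) (hK : 0 < K)
    (hlt : I.right < J.left) (hIgap : J.left - I.right ≤ K * I.length)
    (hJgap : J.left - I.right ≤ K * J.length) : (I.glue J).IsThick K := by
  have hIright {g} (hg : g ∈ I.gaps) {y} (hy : I.right ≤ y) : g.2 - g.1 ≤ K * (y - g.2) :=
    (hI.gap_le_right g hg).trans (by gcongr)
  have hJleft {g} (hg : g ∈ J.gaps) {y} (hy : y ≤ J.left) : g.2 - g.1 ≤ K * (g.1 - y) :=
    (hJ.gap_le_left g hg).trans (by gcongr)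
  have hIJ {g g'} (hg : g ∈ I.gaps) (hg' : g' ∈ J.gaps) : g.2 - g.1 ≤ K * (g'.1 - g.2) :=
    hIright hg (hlt.trans (hJ.left_lt_fst hK hg')).le
  refine ⟨hI.left_le_right.trans (hlt.le.trans hJ.left_le_right), ?_, ?_, ?_, ?_⟩ <;>
    simp only [GappedInterval.glue, Finset.mem_insert, Finset.mem_union]
  · rintro g (rfl | hg | hg)
    exacts [hlt, hI.gap_lt g hg, hJ.gap_lt g hg]
  · rintro g (rfl | hg | hg)
    exacts [hIgap, hI.gap_le_left g hg, hJleft hg (hI.left_le_right.trans hlt.le)]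
  · rintro g (rfl | hg | hg)
    exacts [hJgap, hIright hg (hlt.le.trans hJ.left_le_right), hJ.gap_le_right g hg]
  · rintro g (rfl | hg | hg) g' (rfl | hg' | hg') hne
    · exact absurd rfl hne
    · exact Or.inr (min_le_of_right_le (hIright hg' le_rfl))
    · exact Or.inl (min_le_of_right_le (hJleft hg' le_rfl))
    · exact Or.inl (min_le_of_left_le (hIright hg le_rfl))
    · exact hI.separated g hg g' hg' hne
    · exact Or.inl (min_le_of_left_le (hIJ hg hg'))
    · exact Or.inr (min_le_of_left_le (hJleft hg le_rfl))
    · exact Or.inr (min_le_of_right_le (hIJ hg' hg))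
    · exact hJ.separated g hg g' hg' hne

end GappedInterval

section CantorStages

/-- The stage `preCantorR r n` as the unit interval with explicit gaps. -/
noncomputable def cantorStage (r : ℝ) : ℕ → GappedInterval
  | 0 => ⟨0, 1, ∅⟩
  | n + 1 => ((cantorStage r n).map fun x => r * x + 0).glue
      ((cantorStage r n).map fun x => r * x + (1 - r))

variable {r : ℝ}

theorem cantorStage_left (r : ℝ) (n : ℕ) : (cantorStage r n).left = 0 := by
  induction n with
  | zero => rfl
  | succ n ih => simp [cantorStage, GappedInterval.glue, GappedInterval.map, ih]

theorem cantorStage_right (r : ℝ) (n : ℕ) : (cantorStage r n).right = 1 := by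
  induction n with
  | zero => rfl
  | succ n ih => simp [cantorStage, GappedInterval.glue, GappedInterval.map, ih]

theorem isThick_cantorStage (hr : 1 / 3 ≤ r) (hr' : r < 1 / 2) (n : ℕ) :
    (cantorStage r n).IsThick 1 := by
  induction n with
  | zero => constructor <;> simp [cantorStage]
  | succ n ih =>
    have hmap (c : ℝ) : ((cantorStage r n).map fun x => r * x + c).IsThick 1 :=
      ih.map (quasisymmetricOn_affine (by linarith) c _)
    refine (hmap 0).glue (hmap (1 - r)) one_pos ?_ ?_ ?_ <;>
      simp only [GappedInterval.length, GappedInterval.map, cantorStage_left,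
        cantorStage_right] <;> linarith

theorem carrier_cantorStage_subset (hr : 1 / 3 ≤ r) (hr' : r < 1 / 2) (n : ℕ) :
    (cantorStage r n).carrier ⊆ preCantorR r n := by
  induction n with
  | zero => exact fun x hx => hx.1
  | succ n ih =>
    have hmap (c : ℝ) : ((cantorStage r n).map fun x => r * x + c).carrier ⊆
        (fun x => r * x + c) '' preCantorR r n :=
      ((isThick_cantorStage hr hr' n).carrier_map_subset one_pos
        (quasisymmetricOn_affine (by linarith) c _).strictMonoOn (by fun_prop)).trans
        (image_mono ih)
    refine GappedInterval.carrier_glue_subset.trans (union_subset_union ?_ (hmap (1 - r)))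
    simpa only [add_zero] using hmap 0

theorem isCompact_preCantorR (r : ℝ) (n : ℕ) : IsCompact (preCantorR r n) := by
  induction n with
  | zero => exact isCompact_Icc
  | succ n ih => exact (ih.image (by fun_prop)).union (ih.image (by fun_prop))

theorem antitone_preCantorR (hr0 : 0 ≤ r) (hr1 : r ≤ 1) : Antitone (preCantorR r) := by
  refine antitone_nat_of_succ_le fun n => ?_
  induction n with
  | zero =>
    rintro _ (⟨x, ⟨hx0, hx1⟩, rfl⟩ | ⟨x, ⟨hx0, hx1⟩, rfl⟩)
    · exact ⟨mul_nonneg hr0 hx0, mul_le_one₀ hr1 hx0 hx1⟩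
    · have hle : r * x ≤ r := mul_le_of_le_one_right hr0 hx1
      exact ⟨add_nonneg (mul_nonneg hr0 hx0) (sub_nonneg.2 hr1), by dsimp only; linarith⟩
  | succ n ih => exact union_subset_union (image_mono ih) (image_mono ih)

theorem one_mem_cantorSetR (r : ℝ) : 1 ∈ cantorSetR r := by
  refine mem_iInter.2 fun n => ?_
  induction n with
  | zero => exact ⟨zero_le_one, le_rfl⟩
  | succ n ih => exact Or.inr ⟨1, ih, by ring⟩

theorem cantorSetR_subset_Icc (r : ℝ) : cantorSetR r ⊆ Icc 0 1 :=
  iInter_subset (preCantorR r) 0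

end CantorStages

section SumsOfPowers

theorem iInter_image_subset_image_iInter {X Y : Type*} [TopologicalSpace X] [T2Space X]
    [TopologicalSpace Y] [T1Space Y] {f : X → Y} (hf : Continuous f) {S : ℕ → Set X}
    (hS : Antitone S) (hcompact : ∀ n, IsCompact (S n)) :
    ⋂ n, f '' S n ⊆ f '' ⋂ n, S n := by
  intro y hy
  have hclosed : IsClosed (f ⁻¹' {y}) := isClosed_singleton.preimage hf
  obtain ⟨x, hx⟩ := IsCompact.nonempty_iInter_of_sequence_nonempty_isCompact_isClosed
    (fun n => S n ∩ f ⁻¹' {y}) (fun n => inter_subset_inter_left _ (hS n.le_succ))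
    (mem_iInter.1 hy) ((hcompact 0).inter_right hclosed)
    fun n => ((hcompact n).inter_right hclosed).isClosed
  rw [← iInter_inter] at hx
  exact ⟨x, hx⟩

variable {ι : Type*} {r : ℝ} {A : ℕ} {e : ι → ℕ}

theorem interlocked_map_pow_cantorStage (hr : 1 / 3 ≤ r) (hr' : r < 1 / 2) (hA : A ≠ 0)
    (he : ∀ i, e i ∈ Icc 1 A) (n : ℕ) :
    Interlocked (2 ^ A - 1) fun i => (cantorStage r n).map fun x => x ^ e i := by
  have hK : (1 : ℝ) ≤ 2 ^ A - 1 := by linarith [le_self_pow₀ (one_le_two (α := ℝ)) hA]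
  have he0 (i : ι) : e i ≠ 0 := Nat.one_le_iff_ne_zero.1 (he i).1
  have hthick (i : ι) : ((cantorStage r n).map fun x => x ^ e i).IsThick (2 ^ A - 1) := by
    refine (isThick_cantorStage hr hr' n).map ((quasisymmetricOn_pow (he0 i)).mono ?_ ?_)
    · exact sub_le_sub_right (pow_le_pow_right₀ one_le_two (he i).2) 1
    · rw [cantorStage_left]
      exact Icc_subset_Ici_self
  have hlength (i : ι) : ((cantorStage r n).map fun x => x ^ e i).length = 1 := by
    simp [GappedInterval.length, GappedInterval.map, cantorStage_left, cantorStage_right, he0 i]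
  refine ⟨hthick, fun i j g hg => ?_⟩
  calc g.2 - g.1 ≤ 1 := hlength j ▸ (hthick j).gap_le_length (by linarith) hg
    _ ≤ (2 ^ A - 1) * 1 := by rwa [mul_one]
    _ = (2 ^ A - 1) * ((cantorStage r n).map fun x => x ^ e i).length := by rw [hlength i]

variable [Fintype ι]

theorem exists_sum_pow_eq_of_mem_preCantorR (hr : 1 / 3 ≤ r) (hr' : r < 1 / 2) (hA : A ≠ 0)
    (hcard : 2 ^ A ≤ Fintype.card ι) (he : ∀ i, e i ∈ Icc 1 A) (n : ℕ) {t : ℝ}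
    (ht : t ∈ Icc (0 : ℝ) (Fintype.card ι)) :
    ∃ x : ι → ℝ, (∀ i, x i ∈ preCantorR r n) ∧ ∑ i, x i ^ e i = t := by
  have he0 (i : ι) : e i ≠ 0 := Nat.one_le_iff_ne_zero.1 (he i).1
  have hK : (0 : ℝ) < 2 ^ A - 1 := sub_pos.2 (one_lt_pow₀ one_lt_two hA)
  obtain ⟨z, hz, hzt⟩ := (interlocked_map_pow_cantorStage hr hr' hA he n).exists_sum_eq hK
    (by rw [sub_add_cancel]; exact_mod_cast hcard) (t := t)
    (by simpa [GappedInterval.map, cantorStage_left, cantorStage_right, he0] using ht)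
  have hroot (i : ι) : ∃ x ∈ (cantorStage r n).carrier, x ^ e i = z i := by
    refine (isThick_cantorStage hr hr' n).carrier_map_subset one_pos ?_ (by fun_prop) (hz i)
    refine (pow_left_strictMonoOn₀ (he0 i)).mono fun x hx => ?_
    exact (cantorStage_left r n).ge.trans hx.1
  choose x hx hxz using hroot
  exact ⟨x, fun i => carrier_cantorStage_subset hr hr' n (hx i), by simp only [hxz, hzt]⟩

theorem exists_sum_pow_eq_of_mem_cantorSetR (hr : 1 / 3 ≤ r) (hr' : r < 1 / 2)
    (hcard : 2 ^ A ≤ Fintype.card ι) (he : ∀ i, e i ∈ Icc 1 A) {t : ℝ}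
    (ht : t ∈ Icc (0 : ℝ) (Fintype.card ι)) :
    ∃ x : ι → ℝ, (∀ i, x i ∈ cantorSetR r) ∧ ∑ i, x i ^ e i = t := by
  have hA : A ≠ 0 := by
    obtain ⟨i⟩ := Fintype.card_pos_iff.1 ((pow_pos two_pos A).trans_le hcard)
    exact Nat.one_le_iff_ne_zero.1 ((he i).1.trans (he i).2)
  have hstage : t ∈ ⋂ n, (fun x : ι → ℝ => ∑ i, x i ^ e i) '' univ.pi fun _ => preCantorR r n := by
    refine mem_iInter.2 fun n => ?_
    obtain ⟨x, hx, hxt⟩ := exists_sum_pow_eq_of_mem_preCantorR hr hr' hA hcard he n ht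
    exact ⟨x, fun i _ => hx i, hxt⟩
  obtain ⟨x, hx, hxt⟩ := iInter_image_subset_image_iInter (by fun_prop)
    (fun _ _ h => pi_mono fun _ _ => antitone_preCantorR (by linarith) (by linarith) h)
    (fun n => isCompact_univ_pi fun _ => isCompact_preCantorR r n) hstage
  exact ⟨x, fun i => mem_iInter.2 fun n => mem_iInter.1 hx n i (mem_univ i), hxt⟩

end SumsOfPowers

section PairSums

variable {a : ℕ → ℕ} {m : ℕ} {S : Set ℝ}

theorem imageOnVec_subset_Icc (hS : S ⊆ Icc 0 1) : imageOnVec a m S ⊆ Icc 0 (m : ℝ) := by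
  rintro _ ⟨x, hx, rfl⟩
  have hp0 (i : ℕ) : 0 ≤ x i ^ a i := pow_nonneg (hS (hx i)).1 _
  have hp1 (i : ℕ) : x i ^ a i ≤ 1 := pow_le_one₀ (hS (hx i)).1 (hS (hx i)).2
  refine ⟨Finset.sum_nonneg fun i _ => mul_nonneg (hp0 _) (hp0 _), ?_⟩
  calc pairSumVec a m x ≤ ∑ _i ∈ Finset.range m, (1 : ℝ) :=
        Finset.sum_le_sum fun i _ => mul_le_one₀ (hp1 _) (hp0 _) (hp1 _)
    _ = m := by simp

theorem sum_pow_mul_pow_mem_imageOnVec {u v : ℕ → ℝ} (hu : ∀ i, u i ∈ S) (hv : ∀ i, v i ∈ S) :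
    ∑ i ∈ Finset.range m, u i ^ a (2 * i) * v i ^ a (2 * i + 1) ∈ imageOnVec a m S := by
  refine ⟨fun j => if j % 2 = 0 then u (j / 2) else v (j / 2), fun j => ?_, ?_⟩
  · dsimp only
    split_ifs
    exacts [hu _, hv _]
  · refine Finset.sum_congr rfl fun i _ => ?_
    have hdiv : (2 * i + 1) / 2 = i := by omega
    simp [hdiv]

theorem exists_pow_mul_pow_eq_pow_min (h1 : 1 ∈ S) {z : ℝ} (hz : z ∈ S) (b c : ℕ) :
    ∃ u ∈ S, ∃ v ∈ S, u ^ b * v ^ c = z ^ min b c := by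
  rcases le_total b c with h | h
  · exact ⟨z, hz, 1, h1, by rw [min_eq_left h, one_pow, mul_one]⟩
  · exact ⟨1, h1, z, hz, by rw [min_eq_right h, one_pow, one_mul]⟩

theorem sum_pow_min_mem_imageOnVec (h1 : 1 ∈ S) {z : Fin m → ℝ} (hz : ∀ i, z i ∈ S) :
    ∑ i : Fin m, z i ^ min (a (2 * i)) (a (2 * i + 1)) ∈ imageOnVec a m S := by
  have hext (i : ℕ) : Function.extend Fin.val z 1 i ∈ S := by
    rw [Function.extend_def]
    split_ifs
    exacts [hz _, h1]
  choose u hu v hv huv using fun i =>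
    exists_pow_mul_pow_eq_pow_min h1 (hext i) (a (2 * i)) (a (2 * i + 1))
  have hmem := sum_pow_mul_pow_mem_imageOnVec (a := a) (m := m) hu hv
  simpa only [huv, Finset.sum_range, Fin.val_injective.extend_apply] using hmem

end PairSums

theorem two_pow_half_le_half {s k : ℕ} {c : ℝ} (hc : 0 ≤ c)
    (hk : (2 : ℝ) ^ ((s : ℝ) / 2 + 1) * (⌈c + 1⌉ : ℤ) ≤ k) : 2 ^ (s / 2) ≤ k / 2 := by
  have hceil : (1 : ℝ) ≤ (⌈c + 1⌉ : ℤ) := (le_add_of_nonneg_left hc).trans (Int.le_ceil _)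
  have hexp : ((s / 2 + 1 : ℕ) : ℝ) ≤ (s : ℝ) / 2 + 1 := by
    push_cast
    exact add_le_add_left Nat.cast_div_le 1
  have hpow : (2 : ℝ) ^ (s / 2 + 1) ≤ k :=
    calc (2 : ℝ) ^ (s / 2 + 1) = 2 ^ ((s / 2 + 1 : ℕ) : ℝ) := (Real.rpow_natCast ..).symm
      _ ≤ 2 ^ ((s : ℝ) / 2 + 1) := Real.rpow_le_rpow_of_exponent_le one_le_two hexp
      _ ≤ 2 ^ ((s : ℝ) / 2 + 1) * (⌈c + 1⌉ : ℤ) := le_mul_of_one_le_right (by positivity) hceil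
      _ ≤ k := hk
  rw [Nat.le_div_iff_mul_le two_pos, ← pow_succ]
  exact_mod_cast hpow

theorem stmt_17_general {r : ℝ} (hr : 1 / 3 ≤ r) (hr' : r < 1 / 2) {A m : ℕ} (hm : 2 ^ A ≤ m)
    {a : ℕ → ℕ} (ha : ∀ i < m, min (a (2 * i)) (a (2 * i + 1)) ∈ Icc 1 A) :
    Icc (0 : ℝ) m = imageOnVec a m (cantorSetR r) := by
  refine Subset.antisymm (fun t ht => ?_) (imageOnVec_subset_Icc (cantorSetR_subset_Icc r))
  obtain ⟨z, hz, rfl⟩ := exists_sum_pow_eq_of_mem_cantorSetR (ι := Fin m) hr hr'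
    (by rwa [Fintype.card_fin]) (fun i => ha i i.2) (by rwa [Fintype.card_fin])
  exact sum_pow_min_mem_imageOnVec (one_mem_cantorSetR r) hz

/-- Cantor ternary version of the main theorem: for `s > 2` and `k` even with
`k ≥ 2^{s/2+1}·⌈((s+3)/(s-2))^{s/2-1}·((5s+6)/(5s-6)) + 1⌉`, every choice of positive
exponents with `a_{2i-1} + a_{2i} = s` represents all of `[0, k/2]`. -/
theorem stmt_17 (s : ℕ) (hs : 2 < s) (k : ℕ) (hk : Even k) (hkpos : 0 < k)
    (hkge : (k : ℝ) ≥
      (2 : ℝ) ^ ((s : ℝ) / 2 + 1) *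
        (⌈(((s : ℝ) + 3) / ((s : ℝ) - 2)) ^ ((s : ℝ) / 2 - 1) *
            ((5 * (s : ℝ) + 6) / (5 * (s : ℝ) - 6)) + 1⌉ : ℤ)) :
    ∀ a : ℕ → ℕ, (∀ i < k, 0 < a i) → (∀ i < k / 2, a (2 * i) + a (2 * i + 1) = s) →
      Set.Icc (0 : ℝ) ((k : ℝ) / 2) = imageOnVec a (k / 2) cantorTernary := by
  intro a hpos hsum
  have hs2 : 0 < (s : ℝ) - 2 := sub_pos.2 (by exact_mod_cast hs)
  have hs6 : 0 < 5 * (s : ℝ) - 6 := by linarith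
  have hm : 2 ^ (s / 2) ≤ k / 2 := two_pow_half_le_half (by positivity) hkge
  have hcast : ((k / 2 : ℕ) : ℝ) = (k : ℝ) / 2 := Nat.cast_div_charZero hk.two_dvd
  rw [← hcast]
  exact stmt_17_general le_rfl (by norm_num) hm fun i hi =>
    ⟨le_min (hpos _ (by omega)) (hpos _ (by omega)), by have := hsum i hi; omega⟩
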